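/- arXiv:2410.01009 — 2 statements merged into one kernel-verified Lean document; each statement's English description precedes it below -/
import Mathlib

section
/- Let α, β > −1 be real numbers and n a nonnegative integer. If p and q are nonzero real polynomials that both satisfy (1−x²)·y″(x) + (β−α−(α+β+2)x)·y′(x) + n(n+α+β+1)·y(x) = 0 for all x ∈ ℝ, then p and q are linearly dependent, i.e. q = c·p for some real constant c. (Equivalently, every multiplicative polynomial solution of the multiplicative Jacobi equation is a real power of any fixed one.) -/
open Polynomial

/-- The derivative of a polynomial solution of `(1 - x²) D²y + (a - b x) Dy + c y = 0` solves the
equation of the same shape with parameters `a`, `b + 2`, `c - b`. -/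
theorem hypergeometric_ode_derivative {a b c : ℝ} {y : ℝ[X]}
    (h : (1 - X ^ 2) * derivative (derivative y) + (C a - C b * X) * derivative y + C c * y = 0) :
    (1 - X ^ 2) * derivative (derivative (derivative y))
      + (C a - C (b + 2) * X) * derivative (derivative y) + C (c - b) * derivative y = 0 := by
  have hderiv := congrArg derivative h
  simp only [derivative_add, derivative_sub, derivative_mul, derivative_one, derivative_X_pow,
    derivative_C, derivative_X, derivative_zero] at hderiv
  simp only [C_add, C_sub]
  norm_num at hderiv
  linear_combination hderiv

/-- If `a < b`, a polynomial solution of `(1 - x²) D²y + (a - b x) Dy + c y = 0` vanishing at the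
singular point `1` is zero. -/
theorem hypergeometric_ode_eq_zero_of_eval_one_eq_zero {a b c : ℝ} (hab : a < b) {y : ℝ[X]}
    (h : (1 - X ^ 2) * derivative (derivative y) + (C a - C b * X) * derivative y + C c * y = 0)
    (hy : y.eval 1 = 0) : y = 0 := by
  induction hd : y.natDegree using Nat.strong_induction_on generalizing y b c with
  | _ d ih =>
    have hconst : derivative y = 0 → y = 0 := fun h0 ↦ by
      rw [eq_C_of_derivative_eq_zero h0] at hy ⊢
      simpa using hy
    by_cases hdeg : y.natDegree = 0
    · exact hconst (derivative_of_natDegree_zero hdeg)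
    · have hy_deriv : (derivative y).eval 1 = 0 := by
        have h1 := congrArg (eval 1) h
        simp [hy] at h1
        exact h1.resolve_left (sub_ne_zero.mpr hab.ne)
      exact hconst (ih _ (hd ▸ natDegree_derivative_lt hdeg) (by linarith)
        (hypergeometric_ode_derivative h) hy_deriv rfl)

/-- Any two nonzero polynomial solutions of the Jacobi differential
equation with parameters `α, β > −1` and spectral value `n(n+α+β+1)` are linearly
dependent: `q = c • p` for some real constant `c`. -/
theorem jacobi_polynomial_solution_unique (α β : ℝ) (hα : -1 < α) (hβ : -1 < β) (n : ℕ)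
    (p q : Polynomial ℝ) (hp : p ≠ 0) (hq : q ≠ 0)
    (hpe : ∀ x : ℝ,
      (1 - x ^ 2) * (derivative (derivative p)).eval x
        + (β - α - (α + β + 2) * x) * (derivative p).eval x
        + (n * (n + α + β + 1) : ℝ) * p.eval x = 0)
    (hqe : ∀ x : ℝ,
      (1 - x ^ 2) * (derivative (derivative q)).eval x
        + (β - α - (α + β + 2) * x) * (derivative q).eval x
        + (n * (n + α + β + 1) : ℝ) * q.eval x = 0) :
    ∃ c : ℝ, q = c • p := by
  have key : ∀ y : ℝ[X], (∀ x : ℝ,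
      (1 - x ^ 2) * (derivative (derivative y)).eval x
        + (β - α - (α + β + 2) * x) * (derivative y).eval x
        + (n * (n + α + β + 1) : ℝ) * y.eval x = 0) → y.eval 1 = 0 → y = 0 := by
    intro y hy
    refine hypergeometric_ode_eq_zero_of_eval_one_eq_zero (a := β - α) (b := α + β + 2)
      (c := n * (n + α + β + 1)) (by linarith) (Polynomial.funext fun x ↦ ?_)
    simpa only [eval_add, eval_sub, eval_mul, eval_one, eval_pow, eval_X, eval_C, eval_zero]
      using hy x
  have hp1 : p.eval 1 ≠ 0 := fun h ↦ hp (key p hpe h)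
  refine ⟨q.eval 1 / p.eval 1, sub_eq_zero.mp (key _ (fun x ↦ ?_) ?_)⟩
  · simp only [derivative_sub, derivative_smul, eval_sub, eval_smul, smul_eq_mul]
    linear_combination hqe x - q.eval 1 / p.eval 1 * hpe x
  · simp [hp1]
end

section
/- Let α, β > −1 be real numbers and n a nonnegative integer. Then for every x ∈ (−1,1), the multiplicative Rodrigues formula holds: exp(P_n^{(α,β)}(x)) = exp( ( (−1)^n n! 2^n (1−x)^α(1+x)^β )^{−1} · (d^n/dx^n)[ (1−x)^{n+α} (1+x)^{n+β} ] ); equivalently, P_n^{(α,β)}(x) = ( (−1)^n n! 2^n ω(x) )^{−1} · (d^n/dx^n)[ (1−x²)^n ω(x) ] with ω(x) = (1−x)^α(1+x)^β. -/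
/-- Pochhammer symbol `(a)ₖ = a(a+1)⋯(a+k−1)` for a real number `a`. -/
noncomputable def poch (a : ℝ) (k : ℕ) : ℝ := ∏ j ∈ Finset.range k, (a + j)

/-- The Jacobi polynomial `P_n^{(α,β)}` as a real function, defined by the explicit
representation `P_n^{(α,β)}(x) = (1/n!)[(α+1)_n + Σ_{k=1}^{n} C(n,k) (α+β+n+1)_k
((α+1)_n/(α+1)_k) ((x−1)/2)^k]` for `n ≥ 1`, and `P_0^{(α,β)} = 1`. -/
noncomputable def jacobiP (α β : ℝ) (n : ℕ) : ℝ → ℝ := fun x =>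
  if n = 0 then 1 else
    (1 / (n.factorial : ℝ)) *
      (poch (α + 1) n + ∑ k ∈ Finset.Icc 1 n,
        (n.choose k : ℝ) * poch (α + β + n + 1) k * (poch (α + 1) n / poch (α + 1) k)
          * ((x - 1) / 2) ^ k)

open Polynomial in
/-- The polynomial `Q` with `n! P_n^{(a,b)}(x) = Q((x - 1) / 2)`, defined by the recursion
satisfied by the iterated derivatives in the Rodrigues formula. -/
noncomputable def rodriguesPoly : ℕ → ℝ → ℝ → ℝ[X]
  | 0, _, _ => 1
  | m + 1, a, b =>
      (C (a + 1) + C (a + b + 2) * X) * rodriguesPoly m (a + 1) (b + 1) +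
        X * (1 + X) * derivative (rodriguesPoly m (a + 1) (b + 1))

lemma poch_zero (a : ℝ) : poch a 0 = 1 := by simp [poch]

lemma poch_succ (a : ℝ) (k : ℕ) : poch a (k + 1) = poch a k * (a + k) := by
  simp [poch, Finset.prod_range_succ]

lemma poch_succ_left (a : ℝ) (k : ℕ) : poch a (k + 1) = a * poch (a + 1) k := by
  simp only [poch, Finset.prod_range_succ', Nat.cast_zero, add_zero]
  rw [mul_comm]
  congr 1
  refine Finset.prod_congr rfl fun j _ => ?_
  push_cast
  ring

lemma poch_add (a : ℝ) (k l : ℕ) : poch a (k + l) = poch a k * poch (a + k) l := by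
  simp only [poch, Finset.prod_range_add]
  congr 1
  refine Finset.prod_congr rfl fun j _ => ?_
  push_cast
  ring

lemma poch_pos {a : ℝ} (ha : 0 < a) (k : ℕ) : 0 < poch a k :=
  Finset.prod_pos fun j _ => by positivity

lemma coeff_rodriguesPoly (m : ℕ) (a b : ℝ) (k : ℕ) :
    (rodriguesPoly m a b).coeff k =
      (m.choose k : ℝ) * poch (a + b + m + 1) k * poch (a + 1 + k) (m - k) := by
  induction m generalizing a b k with
  | zero =>
    cases k <;> simp [rodriguesPoly, poch_zero, Polynomial.coeff_one]
  | succ m ih =>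
    have hexp : rodriguesPoly (m + 1) a b =
        Polynomial.C (a + 1) * rodriguesPoly m (a + 1) (b + 1) +
        Polynomial.C (a + b + 2) * (rodriguesPoly m (a + 1) (b + 1) * Polynomial.X) +
        Polynomial.derivative (rodriguesPoly m (a + 1) (b + 1)) * Polynomial.X +
        Polynomial.derivative (rodriguesPoly m (a + 1) (b + 1)) * Polynomial.X * Polynomial.X := by
      rw [rodriguesPoly]
      ring
    rw [hexp]
    cases k with
    | zero =>
      simp only [Polynomial.coeff_add, Polynomial.coeff_C_mul, Polynomial.coeff_mul_X_zero, ih,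
        Nat.choose_zero_right, poch_zero, Nat.sub_zero, poch_succ_left (a + 1 + (0 : ℕ))]
      push_cast
      ring_nf
    | succ k =>
      have hcoeff : (Polynomial.derivative (rodriguesPoly m (a + 1) (b + 1)) * Polynomial.X).coeff k
          = k * (rodriguesPoly m (a + 1) (b + 1)).coeff k := by
        cases k with
        | zero => simp
        | succ k =>
          rw [Polynomial.coeff_mul_X, Polynomial.coeff_derivative]
          push_cast
          ring
      simp only [Polynomial.coeff_add, Polynomial.coeff_C_mul, Polynomial.coeff_mul_X, hcoeff,
        Polynomial.coeff_derivative, ih]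
      rw [Nat.add_sub_add_right]
      have harg : a + 1 + (b + 1) + m + 1 = a + b + m + 2 + 1 := by ring
      have harg' : a + b + ((m + 1 : ℕ) : ℝ) + 1 = a + b + m + 2 := by push_cast; ring
      have hshift : a + 1 + ((k + 1 : ℕ) : ℝ) = a + 1 + 1 + k := by push_cast; ring
      rw [harg, harg', hshift, poch_succ_left (a + b + m + 2), poch_succ (a + b + m + 2 + 1)]
      have hpascal : ((m + 1).choose (k + 1) : ℝ) = m.choose k + m.choose (k + 1) := by
        exact_mod_cast Nat.choose_succ_succ m k
      rw [hpascal]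
      rcases lt_trichotomy k m with hk | rfl | hk
      · obtain ⟨l, rfl⟩ := Nat.exists_eq_add_of_lt hk
        have hsub : k + l + 1 - k = l + 1 := by omega
        have hsub' : k + l + 1 - (k + 1) = l := by omega
        have hratio : ((k + l + 1).choose (k + 1) : ℝ) * (k + 1) =
            (k + l + 1).choose k * (l + 1) := by
          have h := Nat.choose_succ_right_eq (k + l + 1) k
          rw [hsub] at h
          exact_mod_cast h
        have harg'' : a + 1 + 1 + ((k + 1 : ℕ) : ℝ) = a + 1 + 1 + k + 1 := by push_cast; ring
        rw [hsub, hsub', poch_succ_left (a + 1 + 1 + k), harg'']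
        push_cast
        linear_combination (poch (a + b + (k + l + 1) + 2 + 1) k * poch (a + 1 + 1 + k + 1) l *
          (a + 1 + 1 + k)) * hratio
      · simp [poch_zero]
        ring
      · simp [Nat.choose_eq_zero_of_lt hk, Nat.choose_eq_zero_of_lt (Nat.lt_succ_of_lt hk)]

lemma natDegree_rodriguesPoly_le (m : ℕ) (a b : ℝ) : (rodriguesPoly m a b).natDegree ≤ m := by
  rw [Polynomial.natDegree_le_iff_coeff_eq_zero]
  intro k hk
  rw [coeff_rodriguesPoly, Nat.choose_eq_zero_of_lt hk]
  simp

lemma jacobiP_eq_eval_rodriguesPoly {α : ℝ} (hα : -1 < α) (β : ℝ) (n : ℕ) (x : ℝ) :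
    jacobiP α β n x = (n.factorial : ℝ)⁻¹ * (rodriguesPoly n α β).eval ((x - 1) / 2) := by
  rcases Nat.eq_zero_or_pos n with rfl | hn
  · simp [jacobiP, rodriguesPoly]
  have hterm : ∀ k ∈ Finset.Icc 1 n,
      (n.choose k : ℝ) * poch (α + β + n + 1) k * (poch (α + 1) n / poch (α + 1) k) *
        ((x - 1) / 2) ^ k = (rodriguesPoly n α β).coeff k * ((x - 1) / 2) ^ k := by
    intro k hk
    have hsplit := poch_add (α + 1) k (n - k)
    rw [Nat.add_sub_cancel' (Finset.mem_Icc.mp hk).2] at hsplit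
    rw [coeff_rodriguesPoly, hsplit,
      mul_div_cancel_left₀ _ (poch_pos (by linarith : 0 < α + 1) k).ne']
  have hzero : (rodriguesPoly n α β).coeff 0 = poch (α + 1) n := by
    simp [coeff_rodriguesPoly, poch_zero]
  rw [Polynomial.eval_eq_sum_range' (Nat.lt_succ_of_le (natDegree_rodriguesPoly_le n α β)),
    Nat.range_succ_eq_Icc_zero, ← Finset.add_sum_Ioc_eq_sum_Icc (Nat.zero_le n),
    ← Finset.Icc_add_one_left_eq_Ioc, zero_add, ← Finset.sum_congr rfl hterm, hzero]
  simp [jacobiP, hn.ne']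

/-- Rodrigues-type formula for the iterated derivative, valid for all real exponents. -/
lemma iteratedDeriv_one_sub_rpow_mul_one_add_rpow (m : ℕ) (a b : ℝ) {x : ℝ}
    (hx : x ∈ Set.Ioo (-1 : ℝ) 1) :
    iteratedDeriv m (fun t : ℝ => (1 - t) ^ ((m : ℝ) + a) * (1 + t) ^ ((m : ℝ) + b)) x =
      (-2) ^ m * ((1 - x) ^ a * (1 + x) ^ b) * (rodriguesPoly m a b).eval ((x - 1) / 2) := by
  induction m generalizing a b x with
  | zero => simp [rodriguesPoly]
  | succ m ih =>
    have hfun : (fun t : ℝ => (1 - t) ^ (((m + 1 : ℕ) : ℝ) + a) *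
          (1 + t) ^ (((m + 1 : ℕ) : ℝ) + b)) =
        fun t : ℝ => (1 - t) ^ ((m : ℝ) + (a + 1)) * (1 + t) ^ ((m : ℝ) + (b + 1)) := by
      funext t
      push_cast
      ring_nf
    have hev := Filter.eventually_of_mem (isOpen_Ioo.mem_nhds hx)
      fun t ht => ih (a + 1) (b + 1) (x := t) ht
    rw [hfun, iteratedDeriv_succ, Filter.EventuallyEq.deriv_eq hev]
    have hsub : 0 < 1 - x := by linarith [hx.2]
    have hadd : 0 < 1 + x := by linarith [hx.1]
    have hderiv := ((((hasDerivAt_id x).const_sub 1).rpow_const (p := a + 1) (Or.inl hsub.ne')).mul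
      (((hasDerivAt_id x).const_add 1).rpow_const (p := b + 1) (Or.inl hadd.ne'))).const_mul
      ((-2 : ℝ) ^ m)
    have hpoly := ((rodriguesPoly m (a + 1) (b + 1)).hasDerivAt ((x - 1) / 2)).comp x
      (((hasDerivAt_id x).sub_const 1).div_const 2)
    refine (hderiv.mul hpoly).deriv.trans ?_
    simp only [id, Function.comp_apply, Pi.mul_apply, rodriguesPoly, Polynomial.eval_add,
      Polynomial.eval_mul, Polynomial.eval_C, Polynomial.eval_X, Polynomial.eval_one,
      add_sub_cancel_right, Real.rpow_add hsub, Real.rpow_add hadd, Real.rpow_one]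
    ring

/-- The (multiplicative) Rodrigues formula: for `x ∈ (−1,1)`,
`P_n^{(α,β)}(x) = ((−1)^n n! 2^n (1−x)^α (1+x)^β)⁻¹ · (dⁿ/dxⁿ)[(1−x)^{n+α}(1+x)^{n+β}]`,
equivalently `exp (P_n^{(α,β)}(x))` equals the exponential of the right-hand side. -/
theorem jacobiP_rodrigues (α β : ℝ) (hα : -1 < α) (hβ : -1 < β) (n : ℕ)
    (x : ℝ) (hx : x ∈ Set.Ioo (-1 : ℝ) 1) :
    Real.exp (jacobiP α β n x) =
      Real.exp (((-1 : ℝ) ^ n * (n.factorial : ℝ) * 2 ^ n * (1 - x) ^ α * (1 + x) ^ β)⁻¹ *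
        iteratedDeriv n (fun t : ℝ => (1 - t) ^ ((n : ℝ) + α) * (1 + t) ^ ((n : ℝ) + β)) x) := by
  have hsub : 0 < (1 - x) ^ α := Real.rpow_pos_of_pos (by linarith [hx.2]) α
  have hadd : 0 < (1 + x) ^ β := Real.rpow_pos_of_pos (by linarith [hx.1]) β
  have hsign : (-2 : ℝ) ^ n = (-1) ^ n * 2 ^ n := by rw [← mul_pow]; norm_num
  have hone : (-1 : ℝ) ^ n ≠ 0 := pow_ne_zero n (by norm_num)
  rw [iteratedDeriv_one_sub_rpow_mul_one_add_rpow n α β hx, jacobiP_eq_eval_rodriguesPoly hα,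
    hsign]
  congr 1
  field_simp
end
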